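/- Let p(t) = Σ_{k≥0} a_k t^k with 0 ≤ a_k < 1 and Σ a_k = 1, and let p^[n] denote the n-th iterate with coefficients a_k^[n]. Let a^[n] = sup{a_k^[n] : k ≥ 1}. Then (a^[n])_{n∈ℕ} is monotone decreasing and a^[n] → 0 as n → ∞. -/

import Mathlib

open Filter Topology

/-- Coefficient of `t^k` in the composition `p ∘ q` of power series with coefficient
sequences `a` and `b`. -/
noncomputable def compCoeff (a b : ℕ → ℝ) (k : ℕ) : ℝ :=
  ∑' i : ℕ, a i * ∑ f ∈ Finset.Nat.antidiagonalTuple i k, ∏ l, b (f l)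

/-- Coefficients of the iterates: `iterCoeff a (n-1) k = a_k^[n]`, with
`iterCoeff a 0 = a` the coefficients of `p^[1] = p`. -/
noncomputable def iterCoeff (a : ℕ → ℝ) : ℕ → ℕ → ℝ
  | 0 => a
  | n + 1 => compCoeff a (iterCoeff a n)

/-- Convolution power coefficients. -/
noncomputable def pw (b : ℕ → ℝ) (i k : ℕ) : ℝ := PowerSeries.coeff k ((PowerSeries.mk b) ^ i)

/-- Probability distribution on the naturals. -/
def IsD (b : ℕ → ℝ) : Prop := (∀ k, 0 ≤ b k) ∧ HasSum b 1

/-- Generating function. -/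
noncomputable def gf (b : ℕ → ℝ) (t : ℝ) : ℝ := ∑' k, b k * t ^ k

lemma tuple_eq (b : ℕ → ℝ) (i k : ℕ) :
    ∑ f ∈ Finset.Nat.antidiagonalTuple i k, ∏ l, b (f l) = pw b i k := by
  have h : (PowerSeries.mk b) ^ i = ∏ _j : Fin i, PowerSeries.mk b := by simp
  rw [pw, h, PowerSeries.coeff_prod]
  symm
  apply Finset.sum_bij (fun (l : Fin i →₀ ℕ) _ => (l : Fin i → ℕ))
  · intro l hl
    rw [Finset.Nat.mem_antidiagonalTuple]
    exact (Finset.mem_finsuppAntidiag.1 hl).1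
  · intro x _ y _ hxy
    exact DFunLike.coe_injective hxy
  · intro f hf
    refine ⟨Finsupp.equivFunOnFinite.symm f, ?_, by simp⟩
    rw [Finset.mem_finsuppAntidiag]
    exact ⟨by simpa using Finset.Nat.mem_antidiagonalTuple.1 hf, by simp⟩
  · intro l _
    simp

lemma compCoeff_eq (a b : ℕ → ℝ) (k : ℕ) : compCoeff a b k = ∑' i, a i * pw b i k := by
  simp only [compCoeff, tuple_eq]

lemma pw_zero (b : ℕ → ℝ) (k : ℕ) : pw b 0 k = if k = 0 then 1 else 0 := by
  simp [pw, PowerSeries.coeff_one]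

lemma pw_one (b : ℕ → ℝ) (k : ℕ) : pw b 1 k = b k := by
  simp [pw]

lemma pw_add (b : ℕ → ℝ) (i j k : ℕ) :
    pw b (i + j) k = ∑ x ∈ Finset.HasAntidiagonal.antidiagonal k, pw b i x.1 * pw b j x.2 := by
  simp only [pw, pow_add, PowerSeries.coeff_mul]

attribute [irreducible] pw

lemma pw_succ (b : ℕ → ℝ) (i k : ℕ) :
    pw b (i + 1) k = ∑ x ∈ Finset.HasAntidiagonal.antidiagonal k, pw b i x.1 * b x.2 := by
  rw [pw_add]; simp only [pw_one]

lemma pw_nonneg {b : ℕ → ℝ} (hb : ∀ k, 0 ≤ b k) (i k : ℕ) : 0 ≤ pw b i k := by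
  induction i generalizing k with
  | zero => rw [pw_zero]; split_ifs <;> norm_num
  | succ i ih =>
    rw [pw_succ]
    exact Finset.sum_nonneg fun x _ => mul_nonneg (ih _) (hb _)

lemma pw_eval_aux {b : ℕ → ℝ} (hb : IsD b) {t : ℝ} (ht : |t| ≤ 1) (i : ℕ) :
    (Summable fun k => ‖pw b i k * t ^ k‖) ∧ ∑' k, pw b i k * t ^ k = gf b t ^ i := by
  have h1 : Summable fun k => ‖b k * t ^ k‖ := by
    refine Summable.of_nonneg_of_le (fun _ => norm_nonneg _) (fun k => ?_) hb.2.summable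
    rw [norm_mul, norm_pow, Real.norm_eq_abs, Real.norm_eq_abs, abs_of_nonneg (hb.1 k)]
    exact mul_le_of_le_one_right (hb.1 k) (pow_le_one₀ (abs_nonneg _) ht)
  induction i with
  | zero =>
    have : ∀ k, pw b 0 k * t ^ k = if k = 0 then 1 else 0 := by
      intro k; rw [pw_zero]; split_ifs with h <;> simp [h]
    constructor
    · simp only [this]
      refine summable_of_ne_finset_zero (s := {0}) fun k hk => ?_
      simp at hk; simp [hk]
    · simp [this]
  | succ i ih =>
    have e : ∀ k, pw b (i+1) k * t ^ k =
        ∑ x ∈ Finset.HasAntidiagonal.antidiagonal k, (pw b i x.1 * t ^ x.1) * (b x.2 * t ^ x.2) := by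
      intro k
      rw [pw_succ, Finset.sum_mul]
      refine Finset.sum_congr rfl fun x hx => ?_
      rw [← Finset.HasAntidiagonal.mem_antidiagonal.1 hx, pow_add]; ring
    constructor
    · simp only [e]
      exact summable_norm_sum_mul_antidiagonal_of_summable_norm
        (f := fun k => pw b i k * t ^ k) (g := fun k => b k * t ^ k) ih.1 h1
    · simp only [e]
      rw [← tsum_mul_tsum_eq_tsum_sum_antidiagonal_of_summable_norm
        (f := fun k => pw b i k * t ^ k) (g := fun k => b k * t ^ k) ih.1 h1, ih.2, pow_succ]
      rfl

lemma pw_eval {b : ℕ → ℝ} (hb : IsD b) {t : ℝ} (ht : |t| ≤ 1) (i : ℕ) :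
    HasSum (fun k => pw b i k * t ^ k) (gf b t ^ i) := by
  obtain ⟨h1, h2⟩ := pw_eval_aux hb ht i
  rw [← h2]
  exact (Summable.of_norm h1).hasSum

lemma gf_hasSum {b : ℕ → ℝ} (hb : IsD b) {t : ℝ} (ht : |t| ≤ 1) :
    HasSum (fun k => b k * t ^ k) (gf b t) := by
  simpa [pw_one] using pw_eval hb ht 1

lemma gf_one {b : ℕ → ℝ} (hb : IsD b) : gf b 1 = 1 := by
  simpa [gf] using hb.2.tsum_eq

lemma gf_zero (b : ℕ → ℝ) : gf b 0 = b 0 := by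
  rw [gf, tsum_eq_single 0]
  · simp
  · intro k hk; simp [hk]

lemma pw_sum {b : ℕ → ℝ} (hb : IsD b) (i : ℕ) : HasSum (pw b i) 1 := by
  simpa [gf_one hb] using pw_eval hb (t := 1) (by simp) i

lemma pw_isD {b : ℕ → ℝ} (hb : IsD b) (i : ℕ) : IsD (pw b i) := ⟨pw_nonneg hb.1 i, pw_sum hb i⟩

lemma gf_abs {b : ℕ → ℝ} (hb : IsD b) {t : ℝ} (ht : |t| ≤ 1) : |gf b t| ≤ 1 := by
  have h := gf_hasSum hb ht
  have h0 := pow_le_one₀ (n := 1) (abs_nonneg t) ht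
  have hk : ∀ k, |b k * t ^ k| ≤ b k := fun k => by
    rw [abs_mul, abs_pow, abs_of_nonneg (hb.1 k)]
    exact mul_le_of_le_one_right (hb.1 k) (pow_le_one₀ (abs_nonneg _) ht)
  rw [abs_le]
  constructor
  · exact hasSum_le (fun k => (abs_le.1 (hk k)).1) hb.2.neg h
  · exact hasSum_le (fun k => (abs_le.1 (hk k)).2) h hb.2

lemma gf_nonneg {b : ℕ → ℝ} (hb : IsD b) {t : ℝ} (ht : 0 ≤ t) : 0 ≤ gf b t :=
  tsum_nonneg fun k => mul_nonneg (hb.1 k) (pow_nonneg ht k)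

lemma gf_mono {b : ℕ → ℝ} (hb : IsD b) {s t : ℝ} (hs : 0 ≤ s) (hst : s ≤ t) (ht : t ≤ 1) :
    gf b s ≤ gf b t := by
  refine hasSum_le (fun k => ?_) (gf_hasSum hb (t := s) ?_) (gf_hasSum hb (t := t) ?_)
  · exact mul_le_mul_of_nonneg_left (pow_le_pow_left₀ hs hst k) (hb.1 k)
  · rw [abs_of_nonneg hs]; linarith
  · rw [abs_of_nonneg (hs.trans hst)]; exact ht

lemma D_le_one {b : ℕ → ℝ} (hb : IsD b) (k : ℕ) : b k ≤ 1 :=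
  le_hasSum hb.2 k fun j _ => hb.1 j

lemma comp_summable {a b : ℕ → ℝ} (ha : IsD a) (hb : IsD b) (k : ℕ) :
    Summable fun i => a i * pw b i k := by
  refine Summable.of_nonneg_of_le (fun i => mul_nonneg (ha.1 i) (pw_nonneg hb.1 i k))
    (fun i => ?_) ha.2.summable
  exact mul_le_of_le_one_right (ha.1 i) (D_le_one (pw_isD hb i) k)

lemma comp_hasSum {a b : ℕ → ℝ} (ha : IsD a) (hb : IsD b) (k : ℕ) :
    HasSum (fun i => a i * pw b i k) (compCoeff a b k) := by
  rw [compCoeff_eq]; exact (comp_summable ha hb k).hasSum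

lemma comp_eval {a b : ℕ → ℝ} (ha : IsD a) (hb : IsD b) {t : ℝ} (ht : |t| ≤ 1) :
    HasSum (fun k => compCoeff a b k * t ^ k) (gf a (gf b t)) := by
  have hS : Summable (fun x : ℕ × ℕ => a x.1 * pw b x.1 x.2) := by
    have hnn : (0 : ℕ × ℕ → ℝ) ≤ fun x : ℕ × ℕ => a x.1 * pw b x.1 x.2 :=
      fun x => mul_nonneg (ha.1 x.1) (pw_nonneg hb.1 x.1 x.2)
    rw [summable_prod_of_nonneg hnn]
    dsimp only
    refine ⟨fun i => (pw_sum hb i).summable.mul_left (a i), ?_⟩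
    have : ∀ i, ∑' k, a i * pw b i k = a i := fun i => by
      rw [tsum_mul_left, (pw_sum hb i).tsum_eq, mul_one]
    simp only [this]; exact ha.2.summable
  have hS2 : Summable (fun x : ℕ × ℕ => a x.1 * (pw b x.1 x.2 * t ^ x.2)) := by
    refine Summable.of_norm_bounded hS fun x => ?_
    rw [← mul_assoc, norm_mul, norm_pow, Real.norm_eq_abs, Real.norm_eq_abs,
      abs_of_nonneg (mul_nonneg (ha.1 _) (pw_nonneg hb.1 _ _))]
    exact mul_le_of_le_one_right (mul_nonneg (ha.1 _) (pw_nonneg hb.1 _ _))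
      (pow_le_one₀ (abs_nonneg _) ht)
  have h1 := hS2.hasSum.prod_fiberwise (g := fun i => a i * gf b t ^ i)
    (fun i => (pw_eval hb ht i).mul_left (a i))
  have h2 := h1.unique (gf_hasSum ha (gf_abs hb ht))
  have h3 := (Equiv.prodComm ℕ ℕ).hasSum_iff.2 hS2.hasSum
  rw [h2] at h3
  refine h3.prod_fiberwise fun k => ?_
  have := (comp_hasSum ha hb k).mul_right (t ^ k)
  simpa [mul_assoc] using this

lemma comp_isD {a b : ℕ → ℝ} (ha : IsD a) (hb : IsD b) : IsD (compCoeff a b) := by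
  refine ⟨fun k => ?_, ?_⟩
  · rw [compCoeff_eq]
    exact tsum_nonneg fun i => mul_nonneg (ha.1 i) (pw_nonneg hb.1 i k)
  · simpa [gf_one ha, gf_one hb] using comp_eval ha hb (t := 1) (by simp)

lemma comp_gf {a b : ℕ → ℝ} (ha : IsD a) (hb : IsD b) {t : ℝ} (ht : |t| ≤ 1) :
    gf (compCoeff a b) t = gf a (gf b t) := (comp_eval ha hb ht).tsum_eq

lemma iter_isD {a : ℕ → ℝ} (ha : IsD a) (n : ℕ) : IsD (iterCoeff a n) := by
  induction n with
  | zero => exact ha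
  | succ n ih => exact comp_isD ha ih

lemma iter_gf {a : ℕ → ℝ} (ha : IsD a) (n : ℕ) {t : ℝ} (ht : |t| ≤ 1) :
    gf (iterCoeff a n) t = (gf a)^[n + 1] t := by
  induction n with
  | zero => rfl
  | succ n ih =>
    rw [Function.iterate_succ_apply', ← ih]
    exact comp_gf ha (iter_isD ha n) ht

lemma gf_inj {b c : ℕ → ℝ} (hb : IsD b) (hc : IsD c) (h : ∀ t, |t| ≤ 1 → gf b t = gf c t) :
    b = c := by
  have key : ∀ d : ℕ → ℝ, IsD d → (∀ t, |t| ≤ 1 → gf b t = gf d t) →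
      HasFPowerSeriesAt (gf b) (FormalMultilinearSeries.ofScalars ℝ d) 0 := by
    intro d hd hbd
    rw [hasFPowerSeriesAt_iff]
    filter_upwards [Metric.ball_mem_nhds (0:ℝ) one_pos] with t ht
    have ht : |t| ≤ 1 := by
      rw [Metric.mem_ball, Real.dist_eq, sub_zero] at ht; exact ht.le
    rw [zero_add, hbd t ht]
    simpa [mul_comm] using gf_hasSum hd ht
  have e := (key b hb (fun _ _ => rfl)).eq_formalMultilinearSeries (key c hc h)
  funext k
  have := congrArg (fun p => FormalMultilinearSeries.coeff p k) e
  simpa using this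

lemma iter_succ' {a : ℕ → ℝ} (ha : IsD a) (n : ℕ) :
    iterCoeff a (n + 1) = compCoeff (iterCoeff a n) a := by
  refine gf_inj (iter_isD ha _) (comp_isD (iter_isD ha n) ha) fun t ht => ?_
  rw [comp_gf (iter_isD ha n) ha ht, iter_gf ha _ ht, iter_gf ha _ (gf_abs ha ht),
    ← Function.iterate_succ_apply]

lemma pw_le_geom {b : ℕ → ℝ} (hb : IsD b) {m : ℝ} (hm0 : 0 ≤ m) (hm : ∀ k, b (k + 1) ≤ m)
    (i k : ℕ) : pw b i (k + 1) ≤ m * ∑ l ∈ Finset.range i, b 0 ^ l := by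
  induction i with
  | zero => simp [pw_zero]
  | succ i ih =>
    rw [pw_succ, Finset.Nat.sum_antidiagonal_succ', geom_sum_succ]
    have h1 : ∑ x ∈ Finset.HasAntidiagonal.antidiagonal k, pw b i x.1 * b (x.2 + 1) ≤ m := by
      calc _ ≤ ∑ x ∈ Finset.HasAntidiagonal.antidiagonal k, pw b i x.1 * m :=
            Finset.sum_le_sum fun x _ => mul_le_mul_of_nonneg_left (hm _) (pw_nonneg hb.1 _ _)
        _ = (∑ j ∈ Finset.range (k + 1), pw b i j) * m := by
            rw [← Finset.sum_mul,
              Finset.Nat.sum_antidiagonal_eq_sum_range_succ (fun x _ => pw b i x)]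
        _ ≤ 1 * m := by
            refine mul_le_mul_of_nonneg_right ?_ hm0
            exact sum_le_hasSum _ (fun j _ => pw_nonneg hb.1 i j) (pw_sum hb i)
        _ = m := one_mul m
    have h2 := mul_le_mul_of_nonneg_right ih (hb.1 0)
    simp only at *
    nlinarith

lemma comp_le {a b : ℕ → ℝ} (ha : IsD a) (hb : IsD b) (hq : b 0 ≤ gf a (b 0)) {m : ℝ}
    (hm0 : 0 ≤ m) (hm : ∀ k, b (k + 1) ≤ m) (k : ℕ) : compCoeff a b (k + 1) ≤ m := by
  have hab : |b 0| ≤ 1 := by rw [abs_of_nonneg (hb.1 0)]; exact D_le_one hb 0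
  rcases eq_or_lt_of_le (D_le_one hb 0) with h1 | h1
  · have hD := comp_isD ha hb
    have e : compCoeff a b 0 = 1 := by
      rw [← gf_zero (compCoeff a b), comp_gf ha hb (by simp), gf_zero, h1, gf_one ha]
    have := sum_le_hasSum {0, k + 1} (fun j _ => hD.1 j) hD.2
    rw [Finset.sum_pair (by omega)] at this
    linarith
  · have hs : HasSum (fun i => m * (a i * 1 - a i * b 0 ^ i)) (m * (1 - gf a (b 0))) :=
      ((by simpa using ha.2 : HasSum (fun i => a i * 1) 1).sub (gf_hasSum ha hab)).mul_left m
    have h2 := hasSum_le (fun i => ?_) ((comp_hasSum ha hb (k + 1)).mul_right (1 - b 0)) hs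
    · have h3 : m * (1 - gf a (b 0)) ≤ m * (1 - b 0) :=
        mul_le_mul_of_nonneg_left (by linarith) hm0
      exact le_of_mul_le_mul_right (h2.trans h3) (by linarith)
    · have h4 := pw_le_geom hb hm0 hm i k
      have h5 := mul_le_mul_of_nonneg_right h4 (by linarith : 0 ≤ 1 - b 0)
      rw [mul_assoc, geom_sum_mul_neg] at h5
      have h6 := mul_le_mul_of_nonneg_left h5 (ha.1 i)
      linarith

lemma iter_zero_le {a : ℕ → ℝ} (ha : IsD a) (n : ℕ) :
    iterCoeff a (n + 1) 0 = gf a (iterCoeff a n 0) ∧ iterCoeff a n 0 ≤ gf a (iterCoeff a n 0) := by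
  have h : ∀ n, iterCoeff a (n + 1) 0 = gf a (iterCoeff a n 0) := fun n => by
    rw [← gf_zero (iterCoeff a (n + 1)), ← gf_zero (iterCoeff a n)]
    exact comp_gf ha (iter_isD ha n) (by simp)
  refine ⟨h n, ?_⟩
  induction n with
  | zero =>
    have := gf_mono ha le_rfl (ha.1 0) (D_le_one ha 0)
    rwa [gf_zero] at this
  | succ n ih =>
    rw [h n]
    refine gf_mono ha ((iter_isD ha n).1 0) ih ?_
    rw [← h n]; exact D_le_one (iter_isD ha _) 0

lemma iter_bdd {a : ℕ → ℝ} (ha : IsD a) (n : ℕ) :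
    BddAbove (Set.range fun k => iterCoeff a n (k + 1)) :=
  ⟨1, by rintro _ ⟨k, rfl⟩; exact D_le_one (iter_isD ha n) _⟩

lemma iter_antitone {a : ℕ → ℝ} (ha : IsD a) :
    Antitone (fun n => ⨆ k : ℕ, iterCoeff a n (k + 1)) := by
  refine antitone_nat_of_succ_le fun n => ?_
  refine ciSup_le fun k => ?_
  exact comp_le ha (iter_isD ha n) (iter_zero_le ha n).2
    (Real.iSup_nonneg fun k => (iter_isD ha n).1 _) (fun k => le_ciSup (iter_bdd ha n) k) k

lemma pw_ge {b : ℕ → ℝ} (hb : IsD b) (i j x y : ℕ) :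
    pw b i x * pw b j y ≤ pw b (i + j) (x + y) := by
  rw [pw_add]
  exact Finset.single_le_sum (f := fun z : ℕ × ℕ => pw b i z.1 * pw b j z.2)
    (fun z _ => mul_nonneg (pw_nonneg hb.1 _ _) (pw_nonneg hb.1 _ _))
    (Finset.HasAntidiagonal.mem_antidiagonal.2 rfl : (x, y) ∈ Finset.HasAntidiagonal.antidiagonal (x + y))

lemma pw_ge_pow {b : ℕ → ℝ} (hb : IsD b) (u n : ℕ) : b u ^ n ≤ pw b n (n * u) := by
  induction n with
  | zero => simp [pw_zero]
  | succ n ih =>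
    have := pw_ge hb n 1 (n * u) u
    rw [pw_one] at this
    rw [pow_succ, Nat.succ_mul]
    exact (mul_le_mul_of_nonneg_right ih (hb.1 u)).trans this

lemma pw_conv {b : ℕ → ℝ} (hb : IsD b) (n i k j : ℕ) {B : ℝ} (hB : ∀ l, pw b i l ≤ B) :
    pw b n j * (B - if j ≤ k then pw b i (k - j) else 0) ≤ B - pw b (n + i) k := by
  have hB0 : 0 ≤ B := (pw_nonneg hb.1 i 0).trans (hB 0)
  have h1 : HasSum (fun j => pw b n j * if j ≤ k then pw b i (k - j) else 0)
      (pw b (n + i) k) := by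
    rw [pw_add, Finset.Nat.sum_antidiagonal_eq_sum_range_succ (fun x y => pw b n x * pw b i y)]
    have : ∑ j ∈ Finset.range (k + 1), pw b n j * pw b i (k - j) =
        ∑ j ∈ Finset.range (k + 1), pw b n j * if j ≤ k then pw b i (k - j) else 0 := by
      refine Finset.sum_congr rfl fun j hj => ?_
      rw [if_pos (by simpa [Nat.lt_succ_iff] using hj)]
    rw [Nat.succ_eq_add_one, this]
    refine hasSum_sum_of_ne_finset_zero fun j hj => ?_
    rw [if_neg (by simp at hj; omega), mul_zero]
  have h2 := ((pw_sum hb n).mul_right B).sub h1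
  rw [one_mul] at h2
  have h3 := le_hasSum h2 j fun l _ => ?_
  · simpa [mul_sub] using h3
  · rw [← mul_sub]
    refine mul_nonneg (pw_nonneg hb.1 _ _) ?_
    split_ifs
    · linarith [hB (k - l)]
    · linarith

lemma two_pts {a : ℕ → ℝ} (ha : IsD a) (ha1 : ∀ k, a k < 1) :
    ∃ u v, u ≠ v ∧ 0 < a u ∧ 0 < a v := by
  obtain ⟨u, hu⟩ : ∃ u, 0 < a u := by
    by_contra! h
    have : a = fun _ => 0 := funext fun k => le_antisymm (h k) (ha.1 k)
    have h2 := ha.2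
    rw [this] at h2
    exact zero_ne_one (hasSum_zero.unique h2)
  by_contra! h
  have h2 : HasSum a (a u) := hasSum_single u fun v hv =>
    le_antisymm (h u v hv.symm hu) (ha.1 v)
  exact (ha1 u).ne (h2.unique ha.2)

lemma conc {a : ℕ → ℝ} (ha : IsD a) (ha1 : ∀ k, a k < 1) :
    Tendsto (fun i => ⨆ k, pw a i k) atTop (𝓝 0) := by
  set S : ℕ → ℝ := fun i => ⨆ k, pw a i k with hS
  have hbdd : ∀ i, BddAbove (Set.range (pw a i)) := fun i =>
    ⟨1, by rintro _ ⟨k, rfl⟩; exact D_le_one (pw_isD ha i) _⟩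
  have hle : ∀ i k, pw a i k ≤ S i := fun i k => le_ciSup (hbdd i) k
  have hanti : Antitone S := by
    refine antitone_nat_of_succ_le fun i => ciSup_le fun k => ?_
    have h := pw_conv ha 1 i k (k + 1) (hle i)
    rw [if_neg (by omega), add_comm 1 i] at h
    have : 0 ≤ pw a 1 (k + 1) * (S i - 0) :=
      mul_nonneg (pw_nonneg ha.1 _ _) (by linarith [hle i 0, pw_nonneg ha.1 i 0])
    linarith
  have hS0 : ∀ i, 0 ≤ S i := fun i => (pw_nonneg ha.1 i 0).trans (hle i 0)
  have hbb : BddBelow (Set.range S) := ⟨0, by rintro _ ⟨i, rfl⟩; exact hS0 i⟩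
  have ht := tendsto_atTop_ciInf hanti hbb
  set M := ⨅ i, S i with hM
  have hMle : ∀ i, M ≤ S i := fun i => ciInf_le hbb i
  have hM0 : 0 ≤ M := le_ciInf hS0
  rcases eq_or_lt_of_le hM0 with h0 | hpos
  · rwa [← h0] at ht
  exfalso
  obtain ⟨u, v, huv, hu, hv⟩ := two_pts ha ha1
  obtain ⟨n, hn⟩ := exists_nat_gt (2 / M)
  set c := min (a u) (a v) with hc
  have hc0 : 0 < c := lt_min hu hv
  set w := c ^ n with hw
  have hw0 : 0 < w := pow_pos hc0 n
  set J : ℕ → ℕ := fun l => (n - l) * u + l * v with hJ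
  have hJw : ∀ l ≤ n, w ≤ pw a n (J l) := by
    intro l hl
    have h1 := pw_ge ha (n - l) l ((n - l) * u) (l * v)
    rw [Nat.sub_add_cancel hl] at h1
    refine le_trans ?_ h1
    calc w = c ^ (n - l) * c ^ l := by rw [hw, ← pow_add, Nat.sub_add_cancel hl]
      _ ≤ a u ^ (n - l) * a v ^ l := by
          gcongr
          · exact min_le_left _ _
          · exact min_le_right _ _
      _ ≤ _ := mul_le_mul (pw_ge_pow ha u _) (pw_ge_pow ha v _) (pow_nonneg hv.le _)
          (pw_nonneg ha.1 _ _)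
  set δ := w * M / 4 with hδ
  have hδ0 : 0 < δ := by positivity
  obtain ⟨i, hi⟩ := (ht.eventually (gt_mem_nhds (by linarith : M < M + δ))).exists
  obtain ⟨k, hk⟩ : ∃ k, M - δ < pw a (n + i) k :=
    exists_lt_of_lt_ciSup (lt_of_lt_of_le (by linarith) (hMle (n + i)))
  have hg : ∀ l ≤ n, J l ≤ k ∧ M / 2 < pw a i (k - J l) := by
    intro l hl
    have h1 := pw_conv ha n i k (J l) (hle i)
    set g := if J l ≤ k then pw a i (k - J l) else 0 with hgd
    have hgS : g ≤ S i := by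
      rw [hgd]; split_ifs
      · exact hle _ _
      · exact hS0 i
    have h2 : w * (S i - g) ≤ pw a n (J l) * (S i - g) :=
      mul_le_mul_of_nonneg_right (hJw l hl) (by linarith)
    have h3 : w * (S i - g) < w * (M / 2) := by
      have : w * (M / 2) = 2 * δ := by rw [hδ]; ring
      linarith
    have h4 := lt_of_mul_lt_mul_left h3 hw0.le
    have h5 : M / 2 < g := by linarith [hMle i]
    by_cases hJk : J l ≤ k
    · rw [hgd, if_pos hJk] at h5; exact ⟨hJk, h5⟩
    · rw [hgd, if_neg hJk] at h5; linarith
  have hinj : Set.InjOn (fun l => k - J l) (Finset.range (n + 1) : Finset ℕ) := by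
    intro x hx y hy hxy
    have hx : x ≤ n := by simpa [Nat.lt_succ_iff] using hx
    have hy : y ≤ n := by simpa [Nat.lt_succ_iff] using hy
    have e : J x = J y := by
      have := (hg x hx).1
      have := (hg y hy).1
      simp only at hxy
      omega
    simp only [hJ] at e
    obtain ⟨x', rfl⟩ := Nat.exists_eq_add_of_le hx
    zify [hx, hy] at e ⊢
    have e2 : ((x : ℤ) - y) * ((v : ℤ) - u) = 0 := by
      linarith
    rcases mul_eq_zero.1 e2 with h | h
    · linarith
    · exact absurd (by exact_mod_cast (sub_eq_zero.1 h).symm) huv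
  have hsum : ∑ l ∈ Finset.range (n + 1), pw a i (k - J l) ≤ 1 := by
    rw [← Finset.sum_image (f := pw a i) hinj]
    exact sum_le_hasSum _ (fun j _ => pw_nonneg ha.1 i j) (pw_sum ha i)
  have hlow : ∑ l ∈ Finset.range (n + 1), M / 2 ≤
      ∑ l ∈ Finset.range (n + 1), pw a i (k - J l) :=
    Finset.sum_le_sum fun l hl => (hg l (by simpa [Nat.lt_succ_iff] using hl)).2.le
  rw [Finset.sum_const, Finset.card_range, nsmul_eq_mul] at hlow
  rw [div_lt_iff₀ hpos] at hn
  push_cast at hlow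
  nlinarith

lemma gf_half {a : ℕ → ℝ} (ha : IsD a) (h0 : a 0 = 0) {s : ℝ} (hs : 0 ≤ s) (hs1 : s ≤ 1 / 2) :
    gf a s ≤ (1 + a 1) / 2 * s := by
  have h1 : HasSum (fun k => a k * (s / 2) + if k = 1 then a 1 * (s / 2) else 0)
      (1 * (s / 2) + a 1 * (s / 2)) := (ha.2.mul_right _).add (hasSum_ite_eq 1 _)
  have h2 := hasSum_le (fun k => ?_) (gf_hasSum ha (t := s) ?_) h1
  · linarith
  · match k with
    | 0 => simp [h0]
    | 1 => simp; linarith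
    | k + 2 =>
      simp only [Nat.reduceEqDiff, if_false, add_zero]
      refine mul_le_mul_of_nonneg_left ?_ (ha.1 _)
      have : s ^ k ≤ 1 := pow_le_one₀ hs (by linarith)
      have h3 : s ^ k * s ^ 2 ≤ 1 * s ^ 2 := mul_le_mul_of_nonneg_right this (sq_nonneg s)
      rw [pow_add]
      nlinarith
  · rw [abs_of_nonneg hs]; linarith

lemma exists_t {a : ℕ → ℝ} (ha : IsD a) (ha1 : ∀ k, a k < 1) :
    ∃ t, 0 < t ∧ t ≤ 1 ∧
      Tendsto (fun n => gf (iterCoeff a n) t - iterCoeff a n 0) atTop (𝓝 0) := by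
  rcases eq_or_lt_of_le (ha.1 0) with h0 | h0
  · refine ⟨1 / 2, by norm_num, by norm_num, ?_⟩
    set c := (1 + a 1) / 2 with hc
    have hc0 : 0 ≤ c := by have := ha.1 1; positivity
    have hc1 : c < 1 := by have := ha1 1; linarith
    have hb : ∀ n, 0 ≤ (gf a)^[n] (1 / 2) ∧ (gf a)^[n] (1 / 2) ≤ c ^ n * (1 / 2) := by
      intro n
      induction n with
      | zero => simp
      | succ n ih =>
        rw [Function.iterate_succ_apply']
        refine ⟨gf_nonneg ha ih.1, ?_⟩
        have h1 : c ^ n ≤ 1 := pow_le_one₀ hc0 hc1.le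
        have h2 := gf_half ha h0.symm ih.1 (by linarith [ih.2])
        have h3 := mul_le_mul_of_nonneg_left ih.2 hc0
        rw [← hc] at h2
        rw [pow_succ]
        linarith
    have hz : ∀ n, iterCoeff a n 0 = 0 := by
      intro n
      induction n with
      | zero => exact h0.symm
      | succ n ih => rw [(iter_zero_le ha n).1, ih, gf_zero, h0]
    have hlim : Tendsto (fun n : ℕ => c ^ (n + 1) * (1 / 2)) atTop (𝓝 0) := by
      have := ((tendsto_add_atTop_iff_nat 1).2
        (tendsto_pow_atTop_nhds_zero_of_lt_one hc0 hc1)).mul_const (1 / 2 : ℝ)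
      simpa using this
    refine squeeze_zero (fun n => ?_) (fun n => ?_) hlim
    · rw [hz, iter_gf ha n (by norm_num [abs_of_pos]), sub_zero]; exact (hb _).1
    · rw [hz, iter_gf ha n (by norm_num [abs_of_pos]), sub_zero]; exact (hb _).2
  · refine ⟨a 0, h0, D_le_one ha 0, ?_⟩
    have hq : ∀ n, gf (iterCoeff a n) (a 0) = iterCoeff a (n + 1) 0 := by
      intro n
      rw [iter_succ' ha n, ← gf_zero (compCoeff _ _), comp_gf (iter_isD ha n) ha (by simp),
        gf_zero]
    have hmono : Monotone fun n => iterCoeff a n 0 := monotone_nat_of_le_succ fun n => by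
      rw [(iter_zero_le ha n).1]; exact (iter_zero_le ha n).2
    have hl := tendsto_atTop_ciSup hmono
      ⟨1, by rintro _ ⟨n, rfl⟩; exact D_le_one (iter_isD ha n) 0⟩
    have := ((tendsto_add_atTop_iff_nat 1).2 hl).sub hl
    simp only [hq]
    simpa using this

lemma transience {a : ℕ → ℝ} (ha : IsD a) (ha1 : ∀ k, a k < 1) (k : ℕ) (hk : k ≠ 0) :
    Tendsto (fun n => iterCoeff a n k) atTop (𝓝 0) := by
  obtain ⟨t, ht0, ht1, ht⟩ := exists_t ha ha1
  have h2 := ht.div_const (t ^ k)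
  rw [zero_div] at h2
  refine squeeze_zero (fun n => (iter_isD ha n).1 k) (fun n => ?_) h2
  rw [le_div_iff₀ (pow_pos ht0 k)]
  have hD := iter_isD ha n
  have := sum_le_hasSum {0, k} (fun j _ => mul_nonneg (hD.1 j) (pow_nonneg ht0.le j))
    (gf_hasSum hD (t := t) (by rw [abs_of_pos ht0]; exact ht1))
  rw [Finset.sum_pair hk.symm] at this
  simp only [pow_zero, mul_one] at this
  linarith

lemma iter_tendsto {a : ℕ → ℝ} (ha : IsD a) (ha1 : ∀ k, a k < 1) :
    Tendsto (fun n => ⨆ k : ℕ, iterCoeff a n (k + 1)) atTop (𝓝 0) := by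
  rw [← tendsto_add_atTop_iff_nat 1]
  rw [Metric.tendsto_atTop]
  intro ε hε
  obtain ⟨I, hI⟩ := ((conc ha ha1).eventually (gt_mem_nhds (by linarith : 0 < ε / 3))).exists_forall_of_atTop
  have hpI : ∀ i ≥ I, ∀ k, pw a i k ≤ ε / 3 := fun i hi k =>
    (le_ciSup (f := pw a i)
      ⟨1, by rintro _ ⟨k, rfl⟩; exact D_le_one (pw_isD ha i) _⟩ k).trans (hI i hi).le
  have hT : Tendsto (fun n => ∑ i ∈ Finset.range I, if i = 0 then 0 else iterCoeff a n i)
      atTop (𝓝 (∑ i ∈ Finset.range I, 0)) := by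
    refine tendsto_finsetSum _ fun i _ => ?_
    by_cases hi : i = 0
    · simp [hi]
    · simpa [hi] using transience ha ha1 i hi
  rw [Finset.sum_const_zero] at hT
  obtain ⟨N, hN⟩ := (hT.eventually (gt_mem_nhds (by linarith : 0 < ε / 3))).exists_forall_of_atTop
  refine ⟨N, fun n hn => ?_⟩
  have hD := iter_isD ha n
  rw [Real.dist_eq, sub_zero,
    abs_of_nonneg (Real.iSup_nonneg fun k => (iter_isD ha (n + 1)).1 _)]
  refine lt_of_le_of_lt (ciSup_le (c := ε / 3 + ε / 3) fun k => ?_) (by linarith)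
  rw [iter_succ' ha n]
  have h1 : HasSum (fun i => (if i ∈ Finset.range I then
      (if i = 0 then 0 else iterCoeff a n i) else 0) + iterCoeff a n i * (ε / 3))
      ((∑ i ∈ Finset.range I, if i = 0 then 0 else iterCoeff a n i) + 1 * (ε / 3)) := by
    refine HasSum.add ?_ (hD.2.mul_right _)
    have : HasSum (fun i => if i ∈ Finset.range I then
        (if i = 0 then 0 else iterCoeff a n i) else 0)
        (∑ i ∈ Finset.range I, if i ∈ Finset.range I then
          (if i = 0 then 0 else iterCoeff a n i) else 0) :=
      hasSum_sum_of_ne_finset_zero (fun i hi => if_neg hi)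
    rwa [Finset.sum_congr rfl (fun i hi => if_pos hi)] at this
  have h2 := hasSum_le (fun i => ?_) (comp_hasSum hD ha (k + 1)) h1
  · have := hN n hn
    linarith
  · have hε3 : 0 ≤ iterCoeff a n i * (ε / 3) := mul_nonneg (hD.1 i) (by linarith)
    by_cases hi : i ∈ Finset.range I
    · rw [if_pos hi]
      by_cases h0 : i = 0
      · subst h0
        rw [pw_zero]; simpa using hε3
      · rw [if_neg h0]
        have := mul_le_of_le_one_right (hD.1 i) (D_le_one (pw_isD ha i) (k + 1))
        linarith
    · rw [if_neg hi, zero_add]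
      exact mul_le_mul_of_nonneg_left (hpI i (by simpa using hi) _) (hD.1 i)

/-- For `p(t) = Σ a_k t^k` with `0 ≤ a_k < 1` and `Σ a_k = 1`, the suprema
`a^[n] = sup_{k≥1} a_k^[n]` of positive-degree coefficients of the iterates form a
monotone decreasing sequence tending to `0`. -/
theorem stmt14 (a : ℕ → ℝ) (ha0 : ∀ k, 0 ≤ a k) (ha1 : ∀ k, a k < 1)
    (hsum : HasSum a 1) :
    Antitone (fun n => ⨆ k : ℕ, iterCoeff a n (k + 1)) ∧
    Tendsto (fun n => ⨆ k : ℕ, iterCoeff a n (k + 1)) atTop (nhds 0) := by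
  exact ⟨iter_antitone ⟨ha0, hsum⟩, iter_tendsto ⟨ha0, hsum⟩ ha1⟩
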